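/- Let A be a nonempty finite subset of a group G₀ and let G be the subgroup of G₀ generated by the set A⁻¹A. Suppose that A⁻¹A is a proper subset of G and that 3|A⁻¹A| < 5|A|. Then there exist a subgroup K of G that is normal in G, and a subgroup H of G with K ⊆ H and (the underlying set of) H contained in A⁻¹A, such that 2|K| ≥ |H|, (A⁻¹A)K = K(A⁻¹A) = A⁻¹A, |A⁻¹A| = 3|H|, and 6|K| ≥ |A⁻¹A|. -/

import Mathlib

open Pointwise

lemma atom_subgroup {G : Type*} [Group G] [DecidableEq G] (S X : Finset G) (κ : ℕ)
    (hκ : ∀ Y : Finset G, Y.Nonempty → (∃ g, g ∉ Y * S) → Y.card + κ ≤ (Y * S).card)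
    (hX1 : 1 ∈ X) (hXp : ∃ g, g ∉ X * S) (hXc : (X * S).card = X.card + κ)
    (hmin : ∀ Y : Finset G, Y.Nonempty → (∃ g, g ∉ Y * S) → (Y * S).card = Y.card + κ →
      X.card ≤ Y.card)
    (hdual : ∀ W : Finset G, (∀ g, g ∈ X * S ∨ g ∈ W) → X.card ≤ W.card) :
    ∃ H : Subgroup G, ∀ x, x ∈ X ↔ x ∈ H := by
  have key : ∀ g ∈ X, g • X = X := by
    intro g hg
    set Y := g • X with hY
    have hYc : Y.card = X.card := Finset.card_smul_finset g X
    have hYS : (Y * S).card = (X * S).card := by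
      rw [hY, smul_mul_assoc, Finset.card_smul_finset]
    have hgY : g ∈ Y := by
      rw [hY]; exact Finset.mem_smul_finset.2 ⟨1, hX1, by simp⟩
    have hI : (X ∩ Y).Nonempty := ⟨g, Finset.mem_inter.2 ⟨hg, hgY⟩⟩
    have hIpos := hI.card_pos
    have hIp : ∃ g, g ∉ (X ∩ Y) * S := by
      obtain ⟨a, ha⟩ := hXp
      exact ⟨a, fun h => ha (Finset.mul_subset_mul_right Finset.inter_subset_left h)⟩
    have h1 := hκ _ hI hIp
    have h2 : ((X ∩ Y) * S).card ≤ ((X * S) ∩ (Y * S)).card :=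
      Finset.card_le_card Finset.inter_mul_subset
    have h3 := Finset.card_union_add_card_inter (X * S) (Y * S)
    have h4 := Finset.card_union_add_card_inter X Y
    by_cases hU : ∃ g, g ∉ (X ∪ Y) * S
    · have h5 := hκ _ ⟨1, Finset.mem_union_left _ hX1⟩ hU
      rw [Finset.union_mul] at h5
      have h6 := hmin _ hI hIp (by omega)
      have h7 : X ∩ Y = X := Finset.eq_of_subset_of_card_le Finset.inter_subset_left h6
      have h8 : X ∩ Y = Y := Finset.eq_of_subset_of_card_le Finset.inter_subset_right (by omega)
      rw [← h8, h7]
    · push Not at hU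
      have h5 := hdual ((Y * S) \ (X * S)) (by
        intro a
        have := hU a
        rw [Finset.union_mul, Finset.mem_union] at this
        rw [Finset.mem_sdiff]
        tauto)
      have h6 := Finset.card_sdiff_add_card_inter (Y * S) (X * S)
      rw [Finset.inter_comm] at h6
      omega
  refine ⟨MulAction.stabilizer G X, fun x => ⟨fun h => key x h, fun h => ?_⟩⟩
  have h' : x • X = X := h
  rw [← h']
  exact Finset.mem_smul_finset.2 ⟨1, hX1, by simp⟩

lemma exists_atom {G : Type*} [Group G] [DecidableEq G] (S X₀ : Finset G) (c : ℕ)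
    (hS : S.Nonempty)
    (h0 : X₀.Nonempty) (h0p : ∃ g, g ∉ X₀ * S) (h0c : (X₀ * S).card ≤ X₀.card + c) :
    ∃ (κ : ℕ) (X : Finset G), κ ≤ c ∧
    (∀ Y : Finset G, Y.Nonempty → (∃ g, g ∉ Y * S) → Y.card + κ ≤ (Y * S).card) ∧
    1 ∈ X ∧ (∃ g, g ∉ X * S) ∧ (X * S).card = X.card + κ ∧
    (∀ Y : Finset G, Y.Nonempty → (∃ g, g ∉ Y * S) → (Y * S).card = Y.card + κ →
      X.card ≤ Y.card) := by
  classical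
  have hex : ∃ n, ∃ Y : Finset G, Y.Nonempty ∧ (∃ g, g ∉ Y * S) ∧ (Y * S).card ≤ Y.card + n :=
    ⟨c, X₀, h0, h0p, h0c⟩
  set κ := Nat.find hex with hκ
  have hκle : ∀ Y : Finset G, Y.Nonempty → (∃ g, g ∉ Y * S) → Y.card + κ ≤ (Y * S).card := by
    intro Y hY hYp
    have h1 : Y.card ≤ (Y * S).card := Finset.card_le_card_mul_right hS
    have := Nat.find_min' hex ⟨Y, hY, hYp, (show _ ≤ Y.card + ((Y * S).card - Y.card) by omega)⟩
    omega
  obtain ⟨X₁, hX1, hX1p, hX1c⟩ := Nat.find_spec hex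
  have hex2 : ∃ n, ∃ Y : Finset G, Y.Nonempty ∧ (∃ g, g ∉ Y * S) ∧ (Y * S).card = Y.card + κ ∧
      Y.card = n := ⟨_, X₁, hX1, hX1p, le_antisymm hX1c (hκle _ hX1 hX1p), rfl⟩
  obtain ⟨X, ⟨x, hx⟩, ⟨g, hg⟩, hXc, hXn⟩ := Nat.find_spec hex2
  refine ⟨κ, x⁻¹ • X, Nat.find_min' hex ⟨X₀, h0, h0p, h0c⟩, hκle,
    Finset.mem_smul_finset.2 ⟨x, hx, by simp⟩, ⟨x⁻¹ * g, ?_⟩, ?_, ?_⟩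
  · rw [smul_mul_assoc]
    intro h
    obtain ⟨y, hy, hyg⟩ := Finset.mem_smul_finset.1 h
    simp at hyg
    exact hg (hyg ▸ hy)
  · rw [smul_mul_assoc, Finset.card_smul_finset, Finset.card_smul_finset, hXc]
  · intro Y hY hYp hYc
    rw [Finset.card_smul_finset, hXn]
    exact Nat.find_min' hex2 ⟨Y, hY, hYp, hYc, rfl⟩

lemma dual_aux {G : Type*} [Group G] [DecidableEq G] [Fintype G] (S X : Finset G) (κ : ℕ)
    (hX1 : 1 ∈ X) (hXp : ∃ g, g ∉ X * S) (hXc : (X * S).card = X.card + κ) :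
    (Finset.univ \ (X * S)).Nonempty ∧ (∃ g, g ∉ (Finset.univ \ (X * S)) * S⁻¹) ∧
    ((Finset.univ \ (X * S)) * S⁻¹).card ≤ (Finset.univ \ (X * S)).card + κ := by
  have hd : (Finset.univ \ (X * S)) * S⁻¹ ⊆ Finset.univ \ X := by
    intro a ha
    obtain ⟨b, hb, s, hs, rfl⟩ := Finset.mem_mul.1 ha
    simp only [Finset.mem_sdiff, Finset.mem_univ, true_and] at hb ⊢
    intro h
    apply hb
    rw [Finset.mem_inv'] at hs
    exact Finset.mem_mul.2 ⟨_, h, _, hs, by group⟩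
  refine ⟨?_, ⟨1, fun h => ?_⟩, ?_⟩
  · obtain ⟨g, hg⟩ := hXp
    exact ⟨g, by simp [hg]⟩
  · have := hd h
    simp [hX1] at this
  · have h1 := Finset.card_le_card hd
    have h2 := Finset.card_sdiff_add_card_eq_card (Finset.subset_univ X)
    have h3 := Finset.card_sdiff_add_card_eq_card (Finset.subset_univ (X * S))
    omega

lemma exists_sub {G : Type*} [Group G] [DecidableEq G] (S X₀ : Finset G) (c : ℕ)
    (hS : S.Nonempty)
    (h0 : X₀.Nonempty) (h0p : ∃ g, g ∉ X₀ * S) (h0c : (X₀ * S).card ≤ X₀.card + c) :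
    ∃ (H : Subgroup G) (F : Finset G), (∀ x, x ∈ F ↔ x ∈ H) ∧
      (((∃ g, g ∉ F * S) ∧ (F * S).card ≤ F.card + c) ∨
       ((∃ g, g ∉ F * S⁻¹) ∧ (F * S⁻¹).card ≤ F.card + c)) := by
  obtain ⟨κ, X, hκc, hκ, hX1, hXp, hXc, hmin⟩ := exists_atom S X₀ c hS h0 h0p h0c
  by_cases hdual : ∀ W : Finset G, (∀ g, g ∈ X * S ∨ g ∈ W) → X.card ≤ W.card
  · obtain ⟨H, hH⟩ := atom_subgroup S X κ hκ hX1 hXp hXc hmin hdual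
    exact ⟨H, X, hH, Or.inl ⟨hXp, by omega⟩⟩
  · push Not at hdual
    obtain ⟨W, hW, hWX⟩ := hdual
    let _ : Fintype G := ⟨X * S ∪ W, fun g => Finset.mem_union.2 (hW g)⟩
    obtain ⟨z1, z2, z3⟩ := dual_aux S X κ hX1 hXp hXc
    set Z := Finset.univ \ (X * S) with hZ
    have hZW : Z.card ≤ W.card := by
      apply Finset.card_le_card
      intro g hg
      rw [hZ, Finset.mem_sdiff] at hg
      exact (hW g).resolve_left hg.2
    obtain ⟨κ', Y, hκ'c, hκ', hY1, hYp, hYc, hYmin⟩ := exists_atom S⁻¹ Z κ hS.inv z1 z2 z3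
    obtain ⟨v1, v2, v3⟩ := dual_aux S⁻¹ Y κ' hY1 hYp hYc
    rw [inv_inv] at v2 v3
    set V := Finset.univ \ (Y * S⁻¹) with hV
    have e1 := hκ _ v1 v2
    have e2 := hmin _ v1 v2 (by omega)
    have e3 := hκ' _ z1 z2
    have e4 := hYmin _ z1 z2 (by omega)
    obtain ⟨H, hH⟩ := atom_subgroup S⁻¹ Y κ' hκ' hY1 hYp hYc hYmin (by
      intro W' hW'
      have : V.card ≤ W'.card := by
        apply Finset.card_le_card
        intro g hg
        rw [hV, Finset.mem_sdiff] at hg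
        exact (hW' g).resolve_left hg.2
      omega)
    exact ⟨H, Y, hH, Or.inr ⟨hYp, by omega⟩⟩

lemma pick {G : Type*} [DecidableEq G] (L H P Q : Finset G) (f g : G → G)
    (hf : Function.Injective f) (hg : Function.Injective g)
    (hfH : ∀ u ∈ L, f u ∈ H) (hgH : ∀ u ∈ L, g u ∈ H) (hP : P ⊆ H) (hQ : Q ⊆ H)
    (hc : 2 * H.card < L.card + P.card + Q.card) : ∃ u ∈ L, f u ∈ P ∧ g u ∈ Q := by
  by_contra hcon
  push Not at hcon
  have h1 : (L.filter (fun u => f u ∉ P)).card ≤ (H \ P).card :=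
    Finset.card_le_card_of_injOn f (fun u hu => by
      simp at hu ⊢
      exact ⟨hfH u hu.1, hu.2⟩) hf.injOn
  have h2 : (L.filter (fun u => g u ∉ Q)).card ≤ (H \ Q).card :=
    Finset.card_le_card_of_injOn g (fun u hu => by
      simp at hu ⊢
      exact ⟨hgH u hu.1, hu.2⟩) hg.injOn
  have h3 : L ⊆ L.filter (fun u => f u ∉ P) ∪ L.filter (fun u => g u ∉ Q) := by
    intro u hu
    have := hcon u hu
    simp [hu]
    tauto
  have h4 := (Finset.card_le_card h3).trans (Finset.card_union_le _ _)
  have h5 := Finset.card_sdiff_add_card_eq_card hP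
  have h6 := Finset.card_sdiff_add_card_eq_card hQ
  omega

/-- `H ∩ z H z⁻¹`. -/
def conjInf {G : Type*} [Group G] (H : Subgroup G) (z : G) : Subgroup G :=
  H ⊓ H.comap (MulAut.conj z⁻¹).toMonoidHom

lemma mem_conjInf {G : Type*} [Group G] (H : Subgroup G) (z x : G) :
    x ∈ conjInf H z ↔ x ∈ H ∧ z⁻¹ * x * z ∈ H := by
  simp [conjInf, Subgroup.mem_inf]

lemma card_of_mem {G : Type*} [Group G] (H : Subgroup G) (F : Finset G)
    (hF : ∀ x, x ∈ F ↔ x ∈ H) : Nat.card H = F.card := by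
  have : (H : Set G) = (F : Set G) := by ext x; simp [hF]
  have h2 : Nat.card H = Nat.card (F : Set G) := by
    rw [← this]; rfl
  rw [h2]; simp

lemma finite_of_mem {G : Type*} [Group G] (H : Subgroup G) (F : Finset G)
    (hF : ∀ x, x ∈ F ↔ x ∈ H) : Finite H := by
  have : (H : Set G) = (F : Set G) := by ext x; simp [hF]
  have h2 : (H : Set G).Finite := this ▸ F.finite_toSet
  exact h2

lemma card_dvd {G : Type*} [Group G] (H K : Subgroup G) (F FK : Finset G)
    (hF : ∀ x, x ∈ F ↔ x ∈ H) (hFK : ∀ x, x ∈ FK ↔ x ∈ K) (h : K ≤ H) : FK.card ∣ F.card := by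
  rw [← card_of_mem H F hF, ← card_of_mem K FK hFK]
  exact Subgroup.card_dvd_of_le h

/-- conclusion -/
def Concl {G : Type*} [Group G] (D : Finset G) : Prop :=
  ∃ K H : Subgroup G, K.Normal ∧ K ≤ H ∧ (∀ x ∈ H, x ∈ D) ∧ Nat.card H ≤ 2 * Nat.card K ∧
    (∀ d ∈ D, ∀ k ∈ K, d * k ∈ D) ∧ D.card = 3 * Nat.card H

lemma le_norm {G : Type*} [Group G] (H K : Subgroup G) [Finite H] (h : K ≤ H)
    (h2 : Nat.card H ≤ 2 * Nat.card K) : ∀ a ∈ H, ∀ x ∈ K, a * x * a⁻¹ ∈ K := by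
  have e : Nat.card (K.subgroupOf H) = Nat.card K :=
    Nat.card_congr (Subgroup.subgroupOfEquivOfLe h).toEquiv
  have e2 := Subgroup.card_mul_index (K.subgroupOf H)
  have hpos : 0 < Nat.card H := Nat.card_pos
  rw [e] at e2
  have hKpos : 0 < Nat.card K := by
    rcases Nat.eq_zero_or_pos (Nat.card K) with h0 | h0
    · omega
    · exact h0
  have e3 : (K.subgroupOf H).index ≤ 2 := by
    by_contra hc
    push Not at hc
    nlinarith
  have e4 : (K.subgroupOf H).index ≠ 0 := by
    intro h0
    rw [h0] at e2
    omega
  have hn : (K.subgroupOf H).Normal := by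
    have : (K.subgroupOf H).index = 1 ∨ (K.subgroupOf H).index = 2 := by omega
    rcases this with h1 | h1
    · rw [Subgroup.index_eq_one] at h1
      rw [h1]; infer_instance
    · exact Subgroup.normal_of_index_eq_two h1
  intro a ha x hx
  have := hn.conj_mem ⟨x, h hx⟩ hx ⟨a, ha⟩
  exact this

lemma finish {G : Type*} [Group G] [DecidableEq G] (D : Finset G)
    (hcl : Subgroup.closure (D : Set G) = ⊤) (H K : Subgroup G) (F FK : Finset G)
    (hF : ∀ x, x ∈ F ↔ x ∈ H) (hFK : ∀ x, x ∈ FK ↔ x ∈ K) (hKH : K ≤ H)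
    (h2 : F.card ≤ 2 * FK.card) (g : G) (hDg : ∀ d ∈ D, d ∈ H ⊔ Subgroup.zpowers g)
    (hg : ∀ x ∈ K, g * x * g⁻¹ ∈ K) (hHD : ∀ x ∈ H, x ∈ D) (h3 : D.card = 3 * F.card)
    (hDK : ∀ d ∈ D, ∀ k ∈ K, d * k ∈ D) : Concl D := by
  have := finite_of_mem H F hF
  have := finite_of_mem K FK hFK
  have c2 : Nat.card H ≤ 2 * Nat.card K := by
    rw [card_of_mem H F hF, card_of_mem K FK hFK]; exact h2
  refine ⟨K, H, ?_, hKH, hHD, c2, hDK, by rw [card_of_mem H F hF]; exact h3⟩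
  have key : ∀ a, (∀ x ∈ K, a * x * a⁻¹ ∈ K) → a ∈ Subgroup.normalizer (K : Set G) := by
    intro a ha
    have : Finite (K : Set G) := ‹Finite K›
    exact Subgroup.mem_normalizer_fintype ha
  rw [← Subgroup.normalizer_eq_top_iff, eq_top_iff, ← hcl, Subgroup.closure_le]
  intro d hd
  have hle : H ⊔ Subgroup.zpowers g ≤ Subgroup.normalizer (K : Set G) := by
    rw [sup_le_iff]
    refine ⟨fun a ha => key a (le_norm H K hKH c2 a ha), ?_⟩
    rw [Subgroup.zpowers_le]
    exact key g hg
  exact hle (hDg d hd)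

lemma fibre_le {G : Type*} [Group G] [DecidableEq G] (H : Subgroup G) (F : Finset G)
    (hF : ∀ x, x ∈ F ↔ x ∈ H) (z : G) (P Q : Finset G) (hP : P ⊆ F) (hQ : Q ⊆ F) :
    P.card * Q.card ≤ (F.filter (fun x => z⁻¹ * x * z ∈ F)).card *
      ((P ×ˢ Q).image (fun t => t.1⁻¹ * z * t.2)).card := by
  rw [← Finset.card_product]
  apply Finset.card_le_mul_card_image
  intro b hb
  obtain ⟨⟨p₀, q₀⟩, h0, rfl⟩ := Finset.mem_image.1 hb
  rw [Finset.mem_product] at h0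
  apply Finset.card_le_card_of_injOn (fun t => p₀ * t.1⁻¹)
  · rintro ⟨p, q⟩ ht
    simp only [Finset.coe_filter, Finset.mem_product, Set.mem_ofPred_eq] at ht ⊢
    obtain ⟨⟨hp, hq⟩, he⟩ := ht
    have hp' := (hF _).1 (hP hp)
    have hq' := (hF _).1 (hQ hq)
    have hp0 := (hF _).1 (hP h0.1)
    have hq0 := (hF _).1 (hQ h0.2)
    simp only [hF]
    refine ⟨H.mul_mem hp0 (H.inv_mem hp'), ?_⟩
    have : z⁻¹ * (p₀ * p⁻¹) * z = q₀ * q⁻¹ := by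
      have h1 : p⁻¹ * z = p₀⁻¹ * z * q₀ * q⁻¹ := by rw [← he]; group
      calc z⁻¹ * (p₀ * p⁻¹) * z = z⁻¹ * p₀ * (p⁻¹ * z) := by group
        _ = _ := by rw [h1]; group
    rw [this]
    exact H.mul_mem hq0 (H.inv_mem hq')
  · rintro ⟨p, q⟩ ht ⟨p', q'⟩ ht' he
    simp only [Finset.coe_filter, Finset.mem_product, Set.mem_ofPred_eq] at ht ht' he
    have e1 : p = p' := by simpa using he
    subst e1
    have := ht.2.trans ht'.2.symm
    simpa using this

lemma le_fibre {G : Type*} [Group G] [DecidableEq G] (H : Subgroup G) (F : Finset G)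
    (hF : ∀ x, x ∈ F ↔ x ∈ H) (z : G) :
    (F.filter (fun x => z⁻¹ * x * z ∈ F)).card *
      ((F ×ˢ F).image (fun t => t.1⁻¹ * z * t.2)).card ≤ F.card * F.card := by
  rw [← Finset.card_product F F]
  apply Finset.mul_card_image_le_card
  intro b hb
  obtain ⟨⟨p₀, q₀⟩, h0, rfl⟩ := Finset.mem_image.1 hb
  rw [Finset.mem_product] at h0
  have hp0 := (hF _).1 h0.1
  have hq0 := (hF _).1 h0.2
  apply Finset.card_le_card_of_injOn (fun u => (u * p₀, z⁻¹ * u * z * q₀))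
  · intro u hu
    simp only [Finset.coe_filter, Finset.mem_product, Set.mem_ofPred_eq, hF] at hu ⊢
    exact ⟨⟨H.mul_mem hu.1 hp0, H.mul_mem hu.2 hq0⟩, by group⟩
  · intro u _ u' _ he
    simp only [Prod.mk.injEq] at he
    simpa using he.1

lemma inv_mem_D {G : Type*} [Group G] [DecidableEq G] (A : Finset G) (d : G)
    (h : d ∈ A⁻¹ * A) : d⁻¹ ∈ A⁻¹ * A := by
  have : (A⁻¹ * A)⁻¹ = A⁻¹ * A := by simp
  rw [← this]
  exact Finset.inv_mem_inv h

lemma mem_D {G : Type*} [Group G] [DecidableEq G] (A : Finset G) (d : G) :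
    d ∈ A⁻¹ * A ↔ ∃ a ∈ A, ∃ b ∈ A, d = a⁻¹ * b := by
  rw [Finset.mem_mul]
  constructor
  · rintro ⟨a, ha, b, hb, rfl⟩
    exact ⟨a⁻¹, Finset.mem_inv'.1 ha, b, hb, by simp⟩
  · rintro ⟨a, ha, b, hb, rfl⟩
    exact ⟨a⁻¹, Finset.inv_mem_inv ha, b, hb, rfl⟩

lemma left_core {G : Type*} [Group G] [DecidableEq G] (A : Finset G) (H : Subgroup G)
    (F : Finset G) (hF : ∀ x, x ∈ F ↔ x ∈ H) (z : G) (hz : z ∉ H)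
    (hA : ∀ a ∈ A, a ∈ H ∨ z⁻¹ * a ∈ H) (h32 : 3 * F.card < 2 * A.card)
    (hsmall : 3 * (A⁻¹ * A).card < 5 * A.card) :
    A.card ≤ 2 * F.card ∧ (∀ x ∈ H, x ∈ A⁻¹ * A) ∧ (∀ a ∈ H, ∀ b ∈ H, a * z * b ∈ A⁻¹ * A) ∧
    (F.card = (F.filter (fun x => z⁻¹ * x * z ∈ F)).card ∨
      F.card = 2 * (F.filter (fun x => z⁻¹ * x * z ∈ F)).card) ∧
    (∀ d ∈ A⁻¹ * A, d ∈ H ∨ (∃ a ∈ H, ∃ b ∈ H, d = a * z * b) ∨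
      (∃ a ∈ H, ∃ b ∈ H, d = a * z⁻¹ * b)) := by
  set P := A.filter (fun x => x ∈ F) with hPd
  set Q := F.filter (fun x => z * x ∈ A) with hQd
  have hPF : P ⊆ F := fun x hx => (Finset.mem_filter.1 hx).2
  have hQF : Q ⊆ F := Finset.filter_subset _ _
  have hPA : ∀ x ∈ P, x ∈ A := fun x hx => (Finset.mem_filter.1 hx).1
  have hQA : ∀ x ∈ Q, z * x ∈ A := fun x hx => (Finset.mem_filter.1 hx).2
  have hAc : A.card ≤ P.card + Q.card := by
    have : A ⊆ P ∪ Q.image (fun x => z * x) := by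
      intro a ha
      rw [Finset.mem_union]
      rcases hA a ha with h | h
      · exact Or.inl (Finset.mem_filter.2 ⟨ha, (hF _).2 h⟩)
      · exact Or.inr (Finset.mem_image.2
          ⟨z⁻¹ * a, Finset.mem_filter.2 ⟨(hF _).2 h, by simpa using ha⟩, by simp⟩)
    have h1 := (Finset.card_le_card this).trans (Finset.card_union_le _ _)
    have h2 : (Q.image (fun x => z * x)).card ≤ Q.card := Finset.card_image_le
    omega
  have hPc := Finset.card_le_card hPF
  have hQc := Finset.card_le_card hQF
  set FL := F.filter (fun x => z⁻¹ * x * z ∈ F) with hFL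
  have hFLm : ∀ x, x ∈ FL ↔ x ∈ conjInf H z := by
    intro x; rw [hFL, Finset.mem_filter, mem_conjInf, hF, hF]
  have hHD : ∀ x ∈ H, x ∈ A⁻¹ * A := by
    intro x hx
    obtain ⟨u, hu, h1, h2⟩ := pick F F P P (fun u => u) (fun u => u * x)
      (fun _ _ h => h) (mul_left_injective x) (fun u hu => hu)
      (fun u hu => (hF _).2 (H.mul_mem ((hF _).1 hu) hx)) hPF hPF (by omega)
    exact (mem_D _ _).2 ⟨u, hPA _ h1, u * x, hPA _ h2, by group⟩
  have hdvd := card_dvd H (conjInf H z) F FL hF hFLm (fun x hx => ((mem_conjInf _ _ _).1 hx).1)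
  have hFpos : 0 < F.card := Finset.card_pos.2 ⟨1, (hF _).2 H.one_mem⟩
  have h3L : F.card < 3 * FL.card := by
    by_contra hc
    push Not at hc
    have f1 := fibre_le H F hF z P Q hPF hQF
    rw [← hFL] at f1
    set R := (P ×ˢ Q).image (fun t => t.1⁻¹ * z * t.2) with hR
    have hdisj : Disjoint F R := by
      rw [Finset.disjoint_left]
      intro x hx hxR
      obtain ⟨⟨p, q⟩, ht, rfl⟩ := Finset.mem_image.1 hxR
      rw [Finset.mem_product] at ht
      have hp := (hF _).1 (hPF ht.1)
      have hq := (hF _).1 (hQF ht.2)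
      apply hz
      have := H.mul_mem (H.mul_mem hp ((hF _).1 hx)) (H.inv_mem hq)
      simpa [mul_assoc] using this
    have hsub : F ∪ R ⊆ A⁻¹ * A := by
      intro x hx
      rcases Finset.mem_union.1 hx with h | h
      · exact hHD x ((hF _).1 h)
      · obtain ⟨⟨p, q⟩, ht, rfl⟩ := Finset.mem_image.1 h
        rw [Finset.mem_product] at ht
        exact (mem_D _ _).2 ⟨p, hPA _ ht.1, z * q, hQA _ ht.2, by simp [mul_assoc]⟩
    have hDc := Finset.card_le_card hsub
    rw [Finset.card_union_of_disjoint hdisj] at hDc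
    generalize F.card = h at *
    generalize P.card = p at *
    generalize Q.card = q at *
    generalize FL.card = l at *
    generalize R.card = r at *
    generalize (A⁻¹ * A).card = D at *
    generalize A.card = a at *
    obtain ⟨p', rfl⟩ := Nat.exists_eq_add_of_le hPc
    obtain ⟨q', hq'⟩ := Nat.exists_eq_add_of_le hQc
    have t1 : 3 * (p * q) ≤ (p + p') * r := by nlinarith
    have t2 : 3 * (p + p') + 3 * r < 5 * (p + q) := by omega
    have t3 : (p + p') * (3 * (p + p') + 3 * r) < (p + p') * (5 * (p + q)) :=
      Nat.mul_lt_mul_of_pos_left t2 hFpos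
    have t4 : (p + p') * (3 * (p + p')) < (p + p') * (2 * (p + q)) :=
      Nat.mul_lt_mul_of_pos_left (by omega) hFpos
    zify at *
    have t5 : (q' : ℤ) = p + p' - q := by linarith
    have t6 : (0 : ℤ) ≤ p' * q' := by positivity
    rw [t5] at t6
    nlinarith
  have hL12 : F.card = FL.card ∨ F.card = 2 * FL.card := by
    obtain ⟨k, hk⟩ := hdvd
    have hk3 : k < 3 := by
      by_contra hc
      push Not at hc
      nlinarith
    interval_cases k <;> omega
  refine ⟨by omega, hHD, ?_, hL12, ?_⟩
  · intro a ha b hb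
    obtain ⟨u, hu, h1, h2⟩ := pick FL F P Q (fun u => u * a⁻¹) (fun u => z⁻¹ * u * z * b)
      (mul_left_injective _) (by intro x y h; simpa using h)
      (fun u hu => (hF _).2 (H.mul_mem ((hFLm u).1 hu).1 (H.inv_mem ha)))
      (fun u hu => (hF _).2 (H.mul_mem (((mem_conjInf _ _ _).1 ((hFLm u).1 hu)).2) hb))
      hPF hQF (by omega)
    exact (mem_D _ _).2 ⟨_, hPA _ h1, _, hQA _ h2, by group⟩
  · intro d hd
    obtain ⟨a, ha, b, hb, rfl⟩ := (mem_D _ _).1 hd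
    rcases hA a ha with h1 | h1 <;> rcases hA b hb with h2 | h2
    · exact Or.inl (H.mul_mem (H.inv_mem h1) h2)
    · exact Or.inr (Or.inl ⟨a⁻¹, H.inv_mem h1, _, h2, by group⟩)
    · exact Or.inr (Or.inr ⟨_, H.inv_mem h1, b, h2, by group⟩)
    · left
      have := H.mul_mem (H.inv_mem h1) h2
      simpa [mul_assoc] using this

lemma left_asym {G : Type*} [Group G] [DecidableEq G] (A : Finset G) (H : Subgroup G)
    (F : Finset G) (hF : ∀ x, x ∈ F ↔ x ∈ H) (z : G) (hz : z ∉ H)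
    (hA : ∀ a ∈ A, a ∈ H ∨ z⁻¹ * a ∈ H) (h32 : 3 * F.card < 2 * A.card)
    (hsmall : 3 * (A⁻¹ * A).card < 5 * A.card)
    (hcl : Subgroup.closure ((A⁻¹ * A : Finset G) : Set G) = ⊤)
    (hns : ∀ a ∈ H, ∀ b ∈ H, z⁻¹ ≠ a * z * b) : Concl (A⁻¹ * A) := by
  obtain ⟨hA2, hHD, hzD, hL, hD⟩ := left_core A H F hF z hz hA h32 hsmall
  have f1 := fibre_le H F hF z F F subset_rfl subset_rfl
  have f2 := le_fibre H F hF z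
  set FL := F.filter (fun x => z⁻¹ * x * z ∈ F) with hFL
  set T := (F ×ˢ F).image (fun t => t.1⁻¹ * z * t.2) with hT
  have hTm : ∀ x, x ∈ T ↔ ∃ a ∈ H, ∃ b ∈ H, x = a * z * b := by
    intro x
    simp only [hT, Finset.mem_image, Finset.mem_product, Prod.exists, hF]
    constructor
    · rintro ⟨a, b, ⟨ha, hb⟩, rfl⟩
      exact ⟨a⁻¹, H.inv_mem ha, b, hb, rfl⟩
    · rintro ⟨a, ha, b, hb, rfl⟩
      exact ⟨a⁻¹, b, ⟨H.inv_mem ha, hb⟩, by simp⟩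
  have hTi : ∀ x, x ∈ T⁻¹ ↔ ∃ a ∈ H, ∃ b ∈ H, x = a * z⁻¹ * b := by
    intro x
    rw [Finset.mem_inv', hTm]
    constructor
    · rintro ⟨a, ha, b, hb, h⟩
      exact ⟨b⁻¹, H.inv_mem hb, a⁻¹, H.inv_mem ha, by rw [← inv_inv x, h]; group⟩
    · rintro ⟨a, ha, b, hb, rfl⟩
      exact ⟨b⁻¹, H.inv_mem hb, a⁻¹, H.inv_mem ha, by group⟩
  have hFT : Disjoint F T := by
    rw [Finset.disjoint_left]
    intro x hx hxT
    obtain ⟨a, ha, b, hb, rfl⟩ := (hTm x).1 hxT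
    rw [hF, H.mul_mem_cancel_right hb, H.mul_mem_cancel_left ha] at hx
    exact hz hx
  have hFT' : Disjoint F T⁻¹ := by
    rw [Finset.disjoint_left]
    intro x hx hxT
    obtain ⟨a, ha, b, hb, rfl⟩ := (hTi x).1 hxT
    rw [hF, H.mul_mem_cancel_right hb, H.mul_mem_cancel_left ha] at hx
    exact hz (by simpa using hx)
  have hTT : Disjoint T T⁻¹ := by
    rw [Finset.disjoint_left]
    intro x hx hxT
    obtain ⟨a, ha, b, hb, rfl⟩ := (hTi x).1 hxT
    obtain ⟨c, hc, d, hd, h⟩ := (hTm _).1 hx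
    refine hns _ (H.mul_mem (H.inv_mem ha) hc) _ (H.mul_mem hd (H.inv_mem hb)) ?_
    calc z⁻¹ = a⁻¹ * (a * z⁻¹ * b) * b⁻¹ := by group
      _ = _ := by rw [h]; group
  have hDe : A⁻¹ * A = F ∪ (T ∪ T⁻¹) := by
    ext x
    simp only [Finset.mem_union, hTm, hTi, hF]
    refine ⟨hD x, ?_⟩
    rintro (h | ⟨a, ha, b, hb, rfl⟩ | ⟨a, ha, b, hb, rfl⟩)
    · exact hHD x h
    · exact hzD a ha b hb
    · have := inv_mem_D A _ (hzD b⁻¹ (H.inv_mem hb) a⁻¹ (H.inv_mem ha))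
      simpa [mul_assoc] using this
  have hDc : (A⁻¹ * A).card = F.card + (T.card + T.card) := by
    rw [hDe, Finset.card_union_of_disjoint (Finset.disjoint_union_right.2 ⟨hFT, hFT'⟩),
      Finset.card_union_of_disjoint hTT, Finset.card_inv]
  have hFpos : 0 < F.card := Finset.card_pos.2 ⟨1, (hF _).2 H.one_mem⟩
  have hLF : F.card = FL.card := by
    rcases hL with h | h
    · exact h
    · have : 2 * F.card ≤ T.card := by nlinarith
      omega
  have hTc : T.card = F.card := by
    rw [← hLF] at f1 f2
    exact le_antisymm (Nat.le_of_mul_le_mul_left f2 hFpos) (Nat.le_of_mul_le_mul_left f1 hFpos)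
  have hFLe : FL = F := Finset.eq_of_subset_of_card_le (Finset.filter_subset _ _) hLF.le
  refine finish (A⁻¹ * A) hcl H H F F hF hF le_rfl (by omega) z⁻¹ ?_ ?_ hHD (by omega) ?_
  · intro d hd
    have hzz : z⁻¹ ∈ H ⊔ Subgroup.zpowers z⁻¹ :=
      Subgroup.mem_sup_right (Subgroup.mem_zpowers _)
    have hzz' : z ∈ H ⊔ Subgroup.zpowers z⁻¹ := by
      simpa using Subgroup.inv_mem _ hzz
    have hHH : ∀ x ∈ H, x ∈ H ⊔ Subgroup.zpowers z⁻¹ := fun x hx => Subgroup.mem_sup_left hx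
    rcases hD d hd with h | ⟨a, ha, b, hb, rfl⟩ | ⟨a, ha, b, hb, rfl⟩
    · exact hHH _ h
    · exact Subgroup.mul_mem _ (Subgroup.mul_mem _ (hHH _ ha) hzz') (hHH _ hb)
    · exact Subgroup.mul_mem _ (Subgroup.mul_mem _ (hHH _ ha) hzz) (hHH _ hb)
  · intro x hx
    have : x ∈ FL := by rw [hFLe]; exact (hF _).2 hx
    have := (Finset.mem_filter.1 this).2
    rw [inv_inv]
    exact (hF _).1 this
  · intro d hd k hk
    rw [hDe] at hd ⊢
    simp only [Finset.mem_union, hTm, hTi, hF] at hd ⊢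
    rcases hd with h | ⟨a, ha, b, hb, rfl⟩ | ⟨a, ha, b, hb, rfl⟩
    · exact Or.inl (H.mul_mem h hk)
    · exact Or.inr (Or.inl ⟨a, ha, b * k, H.mul_mem hb hk, by group⟩)
    · exact Or.inr (Or.inr ⟨a, ha, b * k, H.mul_mem hb hk, by group⟩)

lemma left_sym {G : Type*} [Group G] [DecidableEq G] (A : Finset G) (H : Subgroup G)
    (F : Finset G) (hF : ∀ x, x ∈ F ↔ x ∈ H) (z : G) (hz : z ∉ H)
    (hA : ∀ a ∈ A, a ∈ H ∨ z⁻¹ * a ∈ H) (h32 : 3 * F.card < 2 * A.card)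
    (hsmall : 3 * (A⁻¹ * A).card < 5 * A.card)
    (hcl : Subgroup.closure ((A⁻¹ * A : Finset G) : Set G) = ⊤)
    (hprop : ∃ g, g ∉ A⁻¹ * A)
    (hs : z * z ∈ H) : Concl (A⁻¹ * A) := by
  obtain ⟨hA2, hHD, hzD, hL, hD⟩ := left_core A H F hF z hz hA h32 hsmall
  have f1 := fibre_le H F hF z F F subset_rfl subset_rfl
  have f2 := le_fibre H F hF z
  set FL := F.filter (fun x => z⁻¹ * x * z ∈ F) with hFL
  have hFLm : ∀ x, x ∈ FL ↔ x ∈ conjInf H z := by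
    intro x; rw [hFL, Finset.mem_filter, mem_conjInf, hF, hF]
  set T := (F ×ˢ F).image (fun t => t.1⁻¹ * z * t.2) with hT
  have hTm : ∀ x, x ∈ T ↔ ∃ a ∈ H, ∃ b ∈ H, x = a * z * b := by
    intro x
    simp only [hT, Finset.mem_image, Finset.mem_product, Prod.exists, hF]
    constructor
    · rintro ⟨a, b, ⟨ha, hb⟩, rfl⟩
      exact ⟨a⁻¹, H.inv_mem ha, b, hb, rfl⟩
    · rintro ⟨a, ha, b, hb, rfl⟩
      exact ⟨a⁻¹, b, ⟨H.inv_mem ha, hb⟩, by simp⟩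
  have hFT : Disjoint F T := by
    rw [Finset.disjoint_left]
    intro x hx hxT
    obtain ⟨a, ha, b, hb, rfl⟩ := (hTm x).1 hxT
    rw [hF, H.mul_mem_cancel_right hb, H.mul_mem_cancel_left ha] at hx
    exact hz hx
  have hD' : ∀ d ∈ A⁻¹ * A, d ∈ H ∨ (∃ a ∈ H, ∃ b ∈ H, d = a * z * b) := by
    intro d hd
    rcases hD d hd with h | h | ⟨a, ha, b, hb, rfl⟩
    · exact Or.inl h
    · exact Or.inr h
    · exact Or.inr ⟨a, ha, (z * z)⁻¹ * b, H.mul_mem (H.inv_mem hs) hb, by group⟩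
  have hDe : A⁻¹ * A = F ∪ T := by
    ext x
    simp only [Finset.mem_union, hTm, hF]
    refine ⟨hD' x, ?_⟩
    rintro (h | ⟨a, ha, b, hb, rfl⟩)
    · exact hHD x h
    · exact hzD a ha b hb
  have hDc : (A⁻¹ * A).card = F.card + T.card := by
    rw [hDe, Finset.card_union_of_disjoint hFT]
  have hFpos : 0 < F.card := Finset.card_pos.2 ⟨1, (hF _).2 H.one_mem⟩
  have hLF : F.card = 2 * FL.card := by
    rcases hL with h | h
    · exfalso
      have hFLe : FL = F := Finset.eq_of_subset_of_card_le (Finset.filter_subset _ _) h.le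
      have hconj : ∀ x ∈ H, z⁻¹ * x * z ∈ H := by
        intro x hx
        have : x ∈ FL := by rw [hFLe]; exact (hF _).2 hx
        exact (hF _).1 (Finset.mem_filter.1 this).2
      obtain ⟨g, hg⟩ := hprop
      have hall : ∀ x : G, x ∈ H ∨ z⁻¹ * x ∈ H := by
        intro x
        have hx : x ∈ Subgroup.closure ((A⁻¹ * A : Finset G) : Set G) := by rw [hcl]; trivial
        induction hx using Subgroup.closure_induction with
        | mem x hx =>
          rcases hD' x hx with h | ⟨a, ha, b, hb, rfl⟩
          · exact Or.inl h
          · right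
            have := H.mul_mem (hconj a ha) hb
            simpa [mul_assoc] using this
        | one => exact Or.inl H.one_mem
        | mul x y _ _ hx hy =>
          rcases hx with hx | hx <;> rcases hy with hy | hy
          · exact Or.inl (H.mul_mem hx hy)
          · right
            have := H.mul_mem (hconj x hx) hy
            simpa [mul_assoc] using this
          · right
            have := H.mul_mem hx hy
            simpa [mul_assoc] using this
          · left
            have := H.mul_mem (H.mul_mem hs (hconj _ hx)) hy
            simpa [mul_assoc] using this
        | inv x _ hx =>
          rcases hx with hx | hx
          · exact Or.inl (H.inv_mem hx)
          · right
            have := H.mul_mem (hconj _ (H.inv_mem hx)) (H.inv_mem hs)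
            simpa [mul_assoc] using this
      rcases hall g with h | h
      · exact hg (hHD g h)
      · have := hzD 1 H.one_mem _ h
        apply hg
        simpa [mul_assoc] using this
    · exact h
  have hTc : T.card = 2 * F.card := by
    have hl : 0 < FL.card := by omega
    apply le_antisymm
    · refine Nat.le_of_mul_le_mul_left (f2.trans ?_) hl
      nlinarith
    · refine Nat.le_of_mul_le_mul_left (le_trans ?_ f1) hl
      nlinarith
  refine finish (A⁻¹ * A) hcl H (conjInf H z) F FL hF hFLm
    (fun x hx => ((mem_conjInf _ _ _).1 hx).1) (by omega) z ?_ ?_ hHD (by omega) ?_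
  · intro d hd
    have hzz : z ∈ H ⊔ Subgroup.zpowers z :=
      Subgroup.mem_sup_right (Subgroup.mem_zpowers _)
    have hHH : ∀ x ∈ H, x ∈ H ⊔ Subgroup.zpowers z := fun x hx => Subgroup.mem_sup_left hx
    rcases hD' d hd with h | ⟨a, ha, b, hb, rfl⟩
    · exact hHH _ h
    · exact Subgroup.mul_mem _ (Subgroup.mul_mem _ (hHH _ ha) hzz) (hHH _ hb)
  · intro x hx
    rw [mem_conjInf] at hx ⊢
    constructor
    · have := H.mul_mem (H.mul_mem hs hx.2) (H.inv_mem hs)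
      simpa [mul_assoc] using this
    · simpa [mul_assoc] using hx.1
  · intro d hd k hk
    have hk := ((mem_conjInf _ _ _).1 hk).1
    rw [hDe] at hd ⊢
    simp only [Finset.mem_union, hTm, hF] at hd ⊢
    rcases hd with h | ⟨a, ha, b, hb, rfl⟩
    · exact Or.inl (H.mul_mem h hk)
    · exact Or.inr ⟨a, ha, b * k, H.mul_mem hb hk, by group⟩

lemma left_main {G : Type*} [Group G] [DecidableEq G] (A : Finset G) (H : Subgroup G)
    (F : Finset G) (hF : ∀ x, x ∈ F ↔ x ∈ H) (z : G) (hz : z ∉ H)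
    (hA : ∀ a ∈ A, a ∈ H ∨ z⁻¹ * a ∈ H) (h32 : 3 * F.card < 2 * A.card)
    (hsmall : 3 * (A⁻¹ * A).card < 5 * A.card)
    (hcl : Subgroup.closure ((A⁻¹ * A : Finset G) : Set G) = ⊤)
    (hprop : ∃ g, g ∉ A⁻¹ * A) : Concl (A⁻¹ * A) := by
  by_cases hns : ∀ a ∈ H, ∀ b ∈ H, z⁻¹ ≠ a * z * b
  · exact left_asym A H F hF z hz hA h32 hsmall hcl hns
  · push Not at hns
    obtain ⟨a, ha, b, hb, hab⟩ := hns
    refine left_sym A H F hF (z * b) (by rwa [H.mul_mem_cancel_right hb]) ?_ h32 hsmall hcl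
      hprop ?_
    · intro x hx
      refine (hA x hx).imp id (fun h => ?_)
      have := H.mul_mem (H.inv_mem hb) h
      simpa [mul_assoc] using this
    · have e : z * b = a⁻¹ * z⁻¹ := by rw [hab]; group
      have : z * b * (z * b) = a⁻¹ * b := by
        nth_rewrite 1 [e]; group
      rw [this]
      exact H.mul_mem (H.inv_mem ha) hb

lemma right_core {G : Type*} [Group G] [DecidableEq G] (A : Finset G) (H : Subgroup G)
    (F : Finset G) (hF : ∀ x, x ∈ F ↔ x ∈ H) (y : G) (hy : y ∉ H)
    (hA : ∀ a ∈ A, a ∈ H ∨ a * y⁻¹ ∈ H) (h32 : 3 * F.card < 2 * A.card) :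
    A.card ≤ 2 * F.card ∧
    (A⁻¹ * A = (F ∪ F.image (fun x => y⁻¹ * x * y)) ∪
      (F.image (fun x => x * y) ∪ F.image (fun x => y⁻¹ * x))) ∧
    Disjoint (F ∪ F.image (fun x => y⁻¹ * x * y))
      (F.image (fun x => x * y) ∪ F.image (fun x => y⁻¹ * x)) ∧
    (F ∪ F.image (fun x => y⁻¹ * x * y)).card +
      (F.filter (fun x => y * x * y⁻¹ ∈ F)).card = 2 * F.card := by
  set P := A.filter (fun x => x ∈ F) with hPd
  set Q := F.filter (fun x => x * y ∈ A) with hQd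
  have hPF : P ⊆ F := fun x hx => (Finset.mem_filter.1 hx).2
  have hQF : Q ⊆ F := Finset.filter_subset _ _
  have hPA : ∀ x ∈ P, x ∈ A := fun x hx => (Finset.mem_filter.1 hx).1
  have hQA : ∀ x ∈ Q, x * y ∈ A := fun x hx => (Finset.mem_filter.1 hx).2
  have hAc : A.card ≤ P.card + Q.card := by
    have : A ⊆ P ∪ Q.image (fun x => x * y) := by
      intro a ha
      rw [Finset.mem_union]
      rcases hA a ha with h | h
      · exact Or.inl (Finset.mem_filter.2 ⟨ha, (hF _).2 h⟩)
      · exact Or.inr (Finset.mem_image.2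
          ⟨a * y⁻¹, Finset.mem_filter.2 ⟨(hF _).2 h, by simpa using ha⟩, by simp⟩)
    have h1 := (Finset.card_le_card this).trans (Finset.card_union_le _ _)
    have h2 : (Q.image (fun x => x * y)).card ≤ Q.card := Finset.card_image_le
    omega
  have hPc := Finset.card_le_card hPF
  have hQc := Finset.card_le_card hQF
  have hpk : ∀ P' Q' : Finset G, P' ⊆ F → Q' ⊆ F → F.card < P'.card + Q'.card → ∀ x ∈ F,
      ∃ u, u ∈ P' ∧ u * x ∈ Q' := by
    intro P' Q' hP' hQ' hc x hx
    obtain ⟨u, hu, h1, h2⟩ := pick F F P' Q' (fun u => u) (fun u => u * x)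
      (fun _ _ h => h) (mul_left_injective x) (fun u hu => hu)
      (fun u hu => (hF _).2 (H.mul_mem ((hF _).1 hu) ((hF _).1 hx))) hP' hQ' (by omega)
    exact ⟨u, h1, h2⟩
  refine ⟨by omega, ?_, ?_, ?_⟩
  · ext d
    simp only [Finset.mem_union, Finset.mem_image]
    constructor
    · intro hd
      obtain ⟨a, ha, b, hb, rfl⟩ := (mem_D _ _).1 hd
      rcases hA a ha with h1 | h1 <;> rcases hA b hb with h2 | h2
      · exact Or.inl (Or.inl ((hF _).2 (H.mul_mem (H.inv_mem h1) h2)))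
      · exact Or.inr (Or.inl ⟨a⁻¹ * (b * y⁻¹), (hF _).2 (H.mul_mem (H.inv_mem h1) h2),
          by group⟩)
      · exact Or.inr (Or.inr ⟨(a * y⁻¹)⁻¹ * b, (hF _).2 (H.mul_mem (H.inv_mem h1) h2),
          by group⟩)
      · exact Or.inl (Or.inr ⟨(a * y⁻¹)⁻¹ * (b * y⁻¹),
          (hF _).2 (H.mul_mem (H.inv_mem h1) h2), by group⟩)
    · rintro ((hx | ⟨x, hx, rfl⟩) | (⟨x, hx, rfl⟩ | ⟨x, hx, rfl⟩))
      · obtain ⟨u, h1, h2⟩ := hpk P P hPF hPF (by omega) _ hx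
        exact (mem_D _ _).2 ⟨_, hPA _ h1, _, hPA _ h2, by group⟩
      · obtain ⟨u, h1, h2⟩ := hpk Q Q hQF hQF (by omega) _ hx
        exact (mem_D _ _).2 ⟨_, hQA _ h1, _, hQA _ h2, by group⟩
      · obtain ⟨u, h1, h2⟩ := hpk P Q hPF hQF (by omega) _ hx
        exact (mem_D _ _).2 ⟨_, hPA _ h1, _, hQA _ h2, by group⟩
      · obtain ⟨u, h1, h2⟩ := hpk Q P hQF hPF (by omega) _ hx
        exact (mem_D _ _).2 ⟨_, hQA _ h1, _, hPA _ h2, by group⟩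
  · rw [Finset.disjoint_left]
    simp only [Finset.mem_union, Finset.mem_image, hF]
    rintro d (hd | ⟨a, ha, rfl⟩) (⟨b, hb, h⟩ | ⟨b, hb, h⟩)
    · rw [← h, H.mul_mem_cancel_left hb] at hd
      exact hy hd
    · rw [← h, H.mul_mem_cancel_right hb] at hd
      exact hy (by simpa using hd)
    · apply hy
      have h' : b = y⁻¹ * a := by simpa using h
      rw [h', H.mul_mem_cancel_right ha] at hb
      simpa using hb
    · apply hy
      have h' : b = a * y := by simpa [mul_assoc] using h
      rwa [h', H.mul_mem_cancel_left ha] at hb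
  · have e1 : (F.image (fun x => y⁻¹ * x * y)).card = F.card :=
      Finset.card_image_of_injective _ (by intro a b h; simpa using h)
    have e2 : F.filter (fun x => y * x * y⁻¹ ∈ F) = F ∩ F.image (fun x => y⁻¹ * x * y) := by
      ext x
      simp only [Finset.mem_filter, Finset.mem_inter, Finset.mem_image]
      refine and_congr_right fun _ => ⟨fun h => ⟨_, h, by group⟩, ?_⟩
      rintro ⟨a, ha, rfl⟩
      simpa [mul_assoc] using ha
    rw [e2, Finset.card_union_add_card_inter, e1]
    omega

lemma right_main {G : Type*} [Group G] [DecidableEq G] (A : Finset G) (H : Subgroup G)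
    (F : Finset G) (hF : ∀ x, x ∈ F ↔ x ∈ H) (y : G) (hy : y ∉ H)
    (hA : ∀ a ∈ A, a ∈ H ∨ a * y⁻¹ ∈ H) (h32 : 3 * F.card < 2 * A.card)
    (hsmall : 3 * (A⁻¹ * A).card < 5 * A.card)
    (hcl : Subgroup.closure ((A⁻¹ * A : Finset G) : Set G) = ⊤)
    (hprop : ∃ g, g ∉ A⁻¹ * A) : Concl (A⁻¹ * A) := by
  by_cases hn : ∀ x ∈ H, y⁻¹ * x * y ∈ H
  · refine left_main A H F hF y hy ?_ h32 hsmall hcl hprop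
    intro a ha
    refine (hA a ha).imp id (fun h => ?_)
    have := hn _ h
    simpa [mul_assoc] using this
  have hFpos : 0 < F.card := Finset.card_pos.2 ⟨1, (hF _).2 H.one_mem⟩
  have hfin := finite_of_mem H F hF
  have gen : ∀ g : G, (¬ ∀ x ∈ H, g⁻¹ * x * g ∈ H) →
      2 * (F.filter (fun x => g * x * g⁻¹ ∈ F)).card ≤ F.card := by
    intro g hg
    have hm : ∀ x, x ∈ F.filter (fun x => g * x * g⁻¹ ∈ F) ↔ x ∈ conjInf H g⁻¹ := by
      intro x; rw [Finset.mem_filter, mem_conjInf, hF, hF, inv_inv]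
    obtain ⟨k, hk⟩ := card_dvd H (conjInf H g⁻¹) F _ hF hm
      (fun x hx => ((mem_conjInf _ _ _).1 hx).1)
    have hk2 : 2 ≤ k := by
      by_contra hc
      have : k = 0 ∨ k = 1 := by omega
      rcases this with rfl | rfl
      · omega
      · apply hg
        have he : F.filter (fun x => g * x * g⁻¹ ∈ F) = F :=
          Finset.eq_of_subset_of_card_le (Finset.filter_subset _ _) (by omega)
        have hh : ∀ x ∈ H, g * x * g⁻¹ ∈ H := by
          intro x hx
          rw [← hF, ← he] at hx
          exact (hF _).1 (Finset.mem_filter.1 hx).2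
        have : Finite (H : Set G) := hfin
        have hgN : g ∈ Subgroup.normalizer (H : Set G) := Subgroup.mem_normalizer_fintype hh
        intro x hx
        have := (Subgroup.mem_normalizer_iff.1 (Subgroup.inv_mem _ hgN) x).1 hx
        simpa using this
    nlinarith
  obtain ⟨c1, c2, c3, c4⟩ := right_core A H F hF y hy hA h32
  have cU2 : ∀ g : G, (F.image (fun x => x * g)).card = F.card := fun g =>
      Finset.card_image_of_injective _ (mul_left_injective g)
  have cU3 : ∀ g : G, (F.image (fun x => g⁻¹ * x)).card = F.card := fun g =>
      Finset.card_image_of_injective _ (mul_right_injective g⁻¹)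
  have hl := gen y hn
  by_cases hd : Disjoint (F.image (fun x => x * y)) (F.image (fun x => y⁻¹ * x))
  · exfalso
    have := congrArg Finset.card c2
    rw [Finset.card_union_of_disjoint c3, Finset.card_union_of_disjoint hd, cU2, cU3] at this
    omega
  rw [Finset.not_disjoint_iff] at hd
  obtain ⟨g, hg1, hg2⟩ := hd
  obtain ⟨k, hk, rfl⟩ := Finset.mem_image.1 hg1
  obtain ⟨k', hk', hkk⟩ := Finset.mem_image.1 hg2
  rw [hF] at hk hk'
  set g := k * y with hg
  have hgg : g * g ∈ H := by
    have : g * g = k * k' := by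
      nth_rewrite 2 [← hkk]
      rw [hg]; group
    rw [this]
    exact H.mul_mem hk hk'
  have hgH : g ∉ H := by rwa [hg, H.mul_mem_cancel_left hk]
  have hgA : ∀ a ∈ A, a ∈ H ∨ a * g⁻¹ ∈ H := by
    intro a ha
    refine (hA a ha).imp id (fun h => ?_)
    have := H.mul_mem h (H.inv_mem hk)
    simpa [hg, mul_assoc] using this
  have hgn : ¬ ∀ x ∈ H, g⁻¹ * x * g ∈ H := by
    intro h
    apply hn
    intro x hx
    have := h (k * x * k⁻¹) (H.mul_mem (H.mul_mem hk hx) (H.inv_mem hk))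
    simpa [hg, mul_assoc] using this
  clear c1 c2 c3 c4 hl
  obtain ⟨c1, c2, c3, c4⟩ := right_core A H F hF g hgH hgA h32
  have hl := gen g hgn
  have hm : ∀ x, x ∈ F.filter (fun x => g * x * g⁻¹ ∈ F) ↔ x ∈ conjInf H g⁻¹ := by
    intro x; rw [Finset.mem_filter, mem_conjInf, hF, hF, inv_inv]
  have hdvd := card_dvd H (conjInf H g⁻¹) F _ hF hm
      (fun x hx => ((mem_conjInf _ _ _).1 hx).1)
  set FL := F.filter (fun x => g * x * g⁻¹ ∈ F) with hFL
  have hint : (F.image (fun x => x * g)) ∩ (F.image (fun x => g⁻¹ * x)) =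
      FL.image (fun x => x * g) := by
    ext x
    simp only [Finset.mem_inter, Finset.mem_image, hFL, Finset.mem_filter, hF]
    constructor
    · rintro ⟨⟨a, ha, rfl⟩, b, hb, hab⟩
      refine ⟨a, ⟨ha, ?_⟩, rfl⟩
      have e : g * a * g⁻¹ = b * (g * g)⁻¹ := by
        have : b = g * (a * g) := by rw [← hab]; group
        rw [this]; group
      rw [e]
      exact H.mul_mem hb (H.inv_mem hgg)
    · rintro ⟨a, ⟨ha, ha2⟩, rfl⟩
      exact ⟨⟨a, ha, rfl⟩, g * a * g⁻¹ * (g * g), H.mul_mem ha2 hgg, by group⟩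
  have cI := Finset.card_union_add_card_inter (F.image (fun x => x * g))
    (F.image (fun x => g⁻¹ * x))
  rw [hint, cU2, cU3, Finset.card_image_of_injective _ (mul_left_injective g)] at cI
  have cD := congrArg Finset.card c2
  rw [Finset.card_union_of_disjoint c3] at cD
  have hF2 : F.card = 2 * FL.card := by
    obtain ⟨m, hm'⟩ := hdvd
    have hm3 : m < 3 := by
      by_contra hc
      push Not at hc
      have : 3 * FL.card ≤ F.card := by rw [hm']; nlinarith
      omega
    interval_cases m <;> omega
  have hmem : ∀ d, d ∈ A⁻¹ * A ↔ (d ∈ H ∨ g * d * g⁻¹ ∈ H) ∨ (d * g⁻¹ ∈ H ∨ g * d ∈ H) := by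
    intro d
    rw [c2]
    simp only [Finset.mem_union, Finset.mem_image, hF]
    refine or_congr (or_congr Iff.rfl ⟨?_, fun h => ⟨_, h, by group⟩⟩)
      (or_congr ⟨?_, fun h => ⟨_, h, by group⟩⟩ ⟨?_, fun h => ⟨_, h, by group⟩⟩)
    · rintro ⟨a, ha, rfl⟩
      simpa [mul_assoc] using ha
    · rintro ⟨a, ha, rfl⟩
      simpa [mul_assoc] using ha
    · rintro ⟨a, ha, rfl⟩
      simpa [mul_assoc] using ha
  refine finish (A⁻¹ * A) hcl H (conjInf H g⁻¹) F FL hF hm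
    (fun x hx => ((mem_conjInf _ _ _).1 hx).1) (by omega) g ?_ ?_
    (fun x hx => (hmem x).2 (Or.inl (Or.inl hx))) (by omega) ?_
  · intro d hd
    have hzz : g ∈ H ⊔ Subgroup.zpowers g :=
      Subgroup.mem_sup_right (Subgroup.mem_zpowers _)
    have hHH : ∀ x ∈ H, x ∈ H ⊔ Subgroup.zpowers g := fun x hx => Subgroup.mem_sup_left hx
    rcases (hmem d).1 hd with (h | h) | (h | h)
    · exact hHH _ h
    · have := hHH _ h
      rwa [Subgroup.mul_mem_cancel_right _ (Subgroup.inv_mem _ hzz),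
        Subgroup.mul_mem_cancel_left _ hzz] at this
    · have := hHH _ h
      rwa [Subgroup.mul_mem_cancel_right _ (Subgroup.inv_mem _ hzz)] at this
    · have := hHH _ h
      rwa [Subgroup.mul_mem_cancel_left _ hzz] at this
  · intro x hx
    rw [mem_conjInf, inv_inv] at hx ⊢
    refine ⟨hx.2, ?_⟩
    have := H.mul_mem (H.mul_mem hgg hx.1) (H.inv_mem hgg)
    simpa [mul_assoc] using this
  · intro d hd x hx
    rw [mem_conjInf, inv_inv] at hx
    rw [hmem] at hd ⊢
    refine hd.imp (Or.imp (fun h => H.mul_mem h hx.1) fun h => ?_)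
      (Or.imp (fun h => ?_) fun h => ?_)
    · have := H.mul_mem h hx.2
      simpa [mul_assoc] using this
    · have := H.mul_mem h hx.2
      simpa [mul_assoc] using this
    · have := H.mul_mem h hx.1
      simpa [mul_assoc] using this

lemma two_cosets {G : Type*} [Group G] [DecidableEq G] (A : Finset G) (H : Subgroup G)
    (F : Finset G) (hF : ∀ x, x ∈ F ↔ x ∈ H) (h1 : 1 ∈ A) (c : ℕ) (hc : 3 * c < 2 * A.card)
    (hFA : (F * A).card ≤ F.card + c) (hnot : ¬ ∀ a ∈ A, a ∈ H) :
    3 * F.card < 2 * A.card ∧ ∃ y, y ∉ H ∧ ∀ a ∈ A, a ∈ H ∨ a * y⁻¹ ∈ H := by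
  push Not at hnot
  obtain ⟨y, hyA, hyH⟩ := hnot
  have cU : ∀ g : G, (F.image (fun x => x * g)).card = F.card := fun g =>
      Finset.card_image_of_injective _ (mul_left_injective g)
  have hsub : ∀ a ∈ A, F.image (fun x => x * a) ⊆ F * A := by
    intro a ha x hx
    obtain ⟨f, hf, rfl⟩ := Finset.mem_image.1 hx
    exact Finset.mul_mem_mul hf ha
  have hdis : ∀ a b : G, b * a⁻¹ ∉ H →
      Disjoint (F.image (fun x => x * a)) (F.image (fun x => x * b)) := by
    intro a b hab
    rw [Finset.disjoint_left]
    intro x hx hx'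
    obtain ⟨f, hf, rfl⟩ := Finset.mem_image.1 hx
    obtain ⟨f', hf', he⟩ := Finset.mem_image.1 hx'
    rw [hF] at hf hf'
    apply hab
    have : b * a⁻¹ = f'⁻¹ * f := by
      have : b = f'⁻¹ * (f * a) := by rw [← he]; group
      rw [this]; group
    rw [this]
    exact H.mul_mem (H.inv_mem hf') hf
  have hAle : A.card ≤ (F * A).card := Finset.card_le_card_mul_left ⟨1, (hF _).2 H.one_mem⟩
  have h1y := hdis 1 y (by simpa using hyH)
  have h2 := Finset.card_le_card (Finset.union_subset (hsub 1 h1) (hsub y hyA))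
  rw [Finset.card_union_of_disjoint h1y, cU, cU] at h2
  refine ⟨by omega, y, hyH, fun a ha => ?_⟩
  by_contra hcon
  push Not at hcon
  have h3 := Finset.card_le_card
    (Finset.union_subset (Finset.union_subset (hsub 1 h1) (hsub y hyA)) (hsub a ha))
  rw [Finset.card_union_of_disjoint (Finset.disjoint_union_left.2
    ⟨hdis 1 a (by simpa using hcon.1), hdis y a hcon.2⟩),
    Finset.card_union_of_disjoint h1y, cU, cU, cU] at h3
  omega

lemma main_one {G : Type*} [Group G] [DecidableEq G] (A : Finset G) (h1 : 1 ∈ A)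
    (hsmall : 3 * (A⁻¹ * A).card < 5 * A.card)
    (hcl : Subgroup.closure ((A⁻¹ * A : Finset G) : Set G) = ⊤)
    (hprop : ∃ g, g ∉ A⁻¹ * A) : Concl (A⁻¹ * A) := by
  have hle : A.card ≤ (A⁻¹ * A).card :=
    Finset.card_le_card_mul_left ⟨1, Finset.mem_inv'.2 (by simpa using h1)⟩
  have hnot : ∀ H : Subgroup G, (∃ g, g ∉ H) → ¬ ∀ a ∈ A, a ∈ H := by
    rintro H ⟨g, hg⟩ hA
    apply hg
    have : Subgroup.closure ((A⁻¹ * A : Finset G) : Set G) ≤ H := by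
      rw [Subgroup.closure_le]
      intro d hd
      obtain ⟨a, ha, b, hb, rfl⟩ := (mem_D _ _).1 hd
      exact H.mul_mem (H.inv_mem (hA a ha)) (hA b hb)
    rw [hcl] at this
    exact this trivial
  have hc : 3 * ((A⁻¹ * A).card - A.card) < 2 * A.card := by omega
  obtain ⟨H, F, hF, ⟨⟨g, hg⟩, hc2⟩ | ⟨⟨g, hg⟩, hc2⟩⟩ :=
    exists_sub A A⁻¹ ((A⁻¹ * A).card - A.card) ⟨1, h1⟩ ⟨1, by simpa using h1⟩ hprop
      (by rw [Finset.card_inv]; omega)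
  · have hgH : g ∉ H := fun h => hg (Finset.mem_mul.2 ⟨g, (hF _).2 h, 1, h1, by simp⟩)
    obtain ⟨h32, y, hy, hA⟩ := two_cosets A H F hF h1 _ hc hc2 (hnot H ⟨g, hgH⟩)
    exact right_main A H F hF y hy hA h32 hsmall hcl hprop
  · have h1' : (1 : G) ∈ A⁻¹ := by simpa using h1
    have hgH : g ∉ H := fun h => hg (Finset.mem_mul.2 ⟨g, (hF _).2 h, 1, h1', by simp⟩)
    obtain ⟨h32, y, hy, hA⟩ := two_cosets A⁻¹ H F hF h1' _ (by rwa [Finset.card_inv]) hc2 (by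
      intro h
      apply hnot H ⟨g, hgH⟩
      intro a ha
      simpa using h a⁻¹ (Finset.inv_mem_inv ha))
    rw [Finset.card_inv] at h32
    refine left_main A H F hF y⁻¹ (by simpa using hy) ?_ h32 hsmall hcl hprop
    intro a ha
    refine (hA a⁻¹ (Finset.inv_mem_inv ha)).imp (fun h => by simpa using h) (fun h => ?_)
    simpa using H.inv_mem h

theorem stmt_15 {G₀ : Type*} [Group G₀] [DecidableEq G₀] (A : Finset G₀)
    (hA : A.Nonempty) (G : Subgroup G₀)
    (hG : G = Subgroup.closure (↑(A⁻¹ * A) : Set G₀))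
    (hproper : (↑(A⁻¹ * A) : Set G₀) ≠ (G : Set G₀))
    (hsmall : 3 * (A⁻¹ * A).card < 5 * A.card) :
    ∃ K H : Subgroup G₀, K ≤ G ∧
      (∀ g ∈ G, ∀ x ∈ K, g * x * g⁻¹ ∈ K) ∧
      K ≤ H ∧ (H : Set G₀) ⊆ (↑(A⁻¹ * A) : Set G₀) ∧
      2 * Nat.card K ≥ Nat.card H ∧
      (↑(A⁻¹ * A) : Set G₀) * (K : Set G₀) = (↑(A⁻¹ * A) : Set G₀) ∧
      (K : Set G₀) * (↑(A⁻¹ * A) : Set G₀) = (↑(A⁻¹ * A) : Set G₀) ∧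
      (A⁻¹ * A).card = 3 * Nat.card H ∧
      6 * Nat.card K ≥ (A⁻¹ * A).card := by
  obtain ⟨a₀, ha₀⟩ := hA
  have hDG : ∀ d ∈ A⁻¹ * A, d ∈ G := by
    intro d hd
    rw [hG]
    exact Subgroup.subset_closure hd
  have hAG : ∀ a ∈ A, a₀⁻¹ * a ∈ G := fun a ha =>
    hDG _ ((mem_D _ _).2 ⟨a₀, ha₀, a, ha, rfl⟩)
  let B : Finset G := A.attach.image (fun a => ⟨a₀⁻¹ * a.1, hAG a.1 a.2⟩)
  have hB : ∀ x : G, x ∈ B ↔ a₀ * (x : G₀) ∈ A := by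
    intro x
    simp only [B, Finset.mem_image, Finset.mem_attach, true_and, Subtype.exists]
    constructor
    · rintro ⟨a, ha, rfl⟩
      simpa using ha
    · intro h
      exact ⟨_, h, by ext; simp⟩
  have hBc : B.card = A.card := by
    have : B.card = A.attach.card := Finset.card_image_of_injective _ (by
      intro a b h
      simp only [Subtype.mk.injEq, mul_right_inj] at h
      exact Subtype.ext h)
    rw [this, Finset.card_attach]
  have hBD : ∀ x : G, x ∈ B⁻¹ * B ↔ (x : G₀) ∈ A⁻¹ * A := by
    intro x
    rw [mem_D, mem_D]
    constructor
    · rintro ⟨a, ha, b, hb, rfl⟩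
      exact ⟨_, (hB a).1 ha, _, (hB b).1 hb, by simp⟩
    · rintro ⟨a, ha, b, hb, h⟩
      refine ⟨⟨_, hAG a ha⟩, (hB _).2 (by simpa using ha), ⟨_, hAG b hb⟩,
        (hB _).2 (by simpa using hb), ?_⟩
      ext
      simp [h]
  have hmap : (B⁻¹ * B).image (fun x : G => (x : G₀)) = A⁻¹ * A := by
    ext d
    simp only [Finset.mem_image, hBD]
    constructor
    · rintro ⟨x, hx, rfl⟩; exact hx
    · intro h; exact ⟨⟨d, hDG d h⟩, h, rfl⟩
  have hDc : (B⁻¹ * B).card = (A⁻¹ * A).card := by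
    rw [← hmap, Finset.card_image_of_injective _ Subtype.val_injective]
  have hcl : Subgroup.closure ((B⁻¹ * B : Finset G) : Set G) = ⊤ := by
    apply Subgroup.map_injective G.subtype_injective
    rw [MonoidHom.map_closure]
    have e : (G.subtype '' ((B⁻¹ * B : Finset G) : Set G)) = ((A⁻¹ * A : Finset G₀) : Set G₀) := by
      rw [← hmap, Finset.coe_image]; rfl
    rw [e, ← hG, ← MonoidHom.range_eq_map, Subgroup.range_subtype]
  have hprop : ∃ g, g ∉ B⁻¹ * B := by
    by_contra hcon
    push Not at hcon
    apply hproper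
    ext x
    exact ⟨fun h => hDG x h, fun h => (hBD ⟨x, h⟩).1 (hcon _)⟩
  obtain ⟨K, H, hKn, hKH, hHD, hc2, hDK, hc3⟩ := main_one B ((hB 1).2 (by simpa using ha₀))
    (by rw [hDc, hBc]; exact hsmall) hcl hprop
  have cm : ∀ K : Subgroup G, Nat.card (K.map G.subtype) = Nat.card K := fun K =>
    (Nat.card_congr (K.equivMapOfInjective G.subtype G.subtype_injective).toEquiv).symm
  have hDK' : ∀ d ∈ A⁻¹ * A, ∀ k ∈ K, d * (k : G₀) ∈ A⁻¹ * A := by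
    intro d hd k hk
    exact (hBD _).1 (hDK ⟨d, hDG d hd⟩ ((hBD _).2 hd) k hk)
  refine ⟨K.map G.subtype, H.map G.subtype, ?_, ?_, Subgroup.map_mono hKH, ?_, ?_, ?_, ?_, ?_, ?_⟩
  · rintro _ ⟨x, _, rfl⟩
    exact x.2
  · rintro g hg _ ⟨x, hx, rfl⟩
    exact ⟨⟨g, hg⟩ * x * ⟨g, hg⟩⁻¹, hKn.conj_mem x hx _, rfl⟩
  · rintro _ ⟨x, hx, rfl⟩
    exact (hBD x).1 (hHD x hx)
  · rw [cm, cm]; exact hc2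
  · ext d
    constructor
    · rintro ⟨a, ha, _, ⟨k, hk, rfl⟩, rfl⟩
      exact hDK' a ha k hk
    · intro hd
      exact ⟨d, hd, 1, Subgroup.one_mem _, by simp⟩
  · ext d
    constructor
    · rintro ⟨_, ⟨k, hk, rfl⟩, a, ha, rfl⟩
      have := hDK' a ha _ (hKn.conj_mem k hk (⟨a, hDG a ha⟩ : G)⁻¹)
      rw [Finset.mem_coe]
      simpa [mul_assoc] using this
    · intro hd
      exact ⟨1, Subgroup.one_mem _, d, hd, by simp⟩
  · rw [cm, ← hDc]; exact hc3
  · rw [cm, ← hDc, hc3]; omega
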